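/- Let n ≥ 1, L > 0, and let f : ℝⁿ × ℝⁿ → ℝⁿ be L-Lipschitz. Fix 0 < ε < 1/4 and a > max{5L, 5}, and set k_p = −(ε(1+ε) + (1+2ε)a), k_i = −ε(1+ε)a, k_d = −(a + 1 + 2ε). Then for any setpoint y* ∈ ℝⁿ and any differentiable functions x₁, x₂ : [0,∞) → ℝⁿ satisfying x₁'(t) = x₂(t) and x₂'(t) = f(x₁(t), x₂(t)) + k_p·(x₁(t) − y*) + k_i·∫₀ᵗ (x₁(s) − y*) ds + k_d·x₂(t) for all t ≥ 0, there exist constants C > 0 and μ > 0 such that ‖x₁(t) − y*‖ + ‖x₂(t)‖ ≤ C·e^{−μt} for all t ≥ 0. -/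

import Mathlib

open Real MeasureTheory intervalIntegral

/-- A differential inequality `V' ≤ -μ V` on `[0, ∞)` forces exponential decay. -/
lemma le_mul_exp_of_hasDerivAt_le {V V' : ℝ → ℝ} {μ : ℝ}
    (hV : ∀ t, 0 ≤ t → HasDerivAt V (V' t) t) (hle : ∀ t, 0 ≤ t → V' t ≤ -μ * V t)
    {t : ℝ} (ht : 0 ≤ t) : V t ≤ V 0 * exp (-μ * t) := by
  have hd : ∀ s, 0 ≤ s → HasDerivAt (fun s => exp (μ * s) * V s)
      (exp (μ * s) * μ * V s + exp (μ * s) * V' s) s := fun s hs => by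
    have h : HasDerivAt (fun s => exp (μ * s)) (exp (μ * s) * μ) s := by
      simpa using ((hasDerivAt_id s).const_mul μ).exp
    exact h.mul (hV s hs)
  have hanti : AntitoneOn (fun s => exp (μ * s) * V s) (Set.Ici 0) := by
    apply antitoneOn_of_deriv_nonpos (convex_Ici 0)
    · exact fun s hs => (hd s hs).continuousAt.continuousWithinAt
    · intro s hs
      exact (hd s (interior_subset hs)).differentiableAt.differentiableWithinAt
    · intro s hs
      have hs' : 0 ≤ s := interior_subset hs
      rw [(hd s hs').deriv]
      nlinarith [hle s hs', exp_pos (μ * s)]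
  have h := hanti Set.self_mem_Ici ht ht
  simp only [mul_zero, exp_zero, one_mul] at h
  calc V t = (exp (μ * t) * V t) * exp (-μ * t) := by
        rw [mul_right_comm, ← exp_add]; simp
    _ ≤ V 0 * exp (-μ * t) := by gcongr

section Lyapunov

variable {E : Type*} [NormedAddCommGroup E] [InnerProductSpace ℝ E]

/-- The error and its derivative, in modal coordinates, are controlled by the modes. -/
lemma norm_sq_add_norm_sq_modal_le {ε : ℝ} (hε0 : 0 < ε) (hε : ε < 1 / 4) (w P Q : E) :
    ‖Q - P‖ ^ 2 + ‖w + ε • P - (1 + ε) • Q‖ ^ 2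
      ≤ 3 * ‖w‖ ^ 2 + 11 / 5 * ‖P‖ ^ 2 + 67 / 10 * ‖Q‖ ^ 2 := by
  have h1 : ‖Q - P‖ ≤ ‖Q‖ + ‖P‖ := norm_sub_le _ _
  have h2 : ‖w + ε • P - (1 + ε) • Q‖ ≤ ‖w‖ + 1 / 4 * ‖P‖ + 5 / 4 * ‖Q‖ := by
    calc ‖w + ε • P - (1 + ε) • Q‖ ≤ ‖w‖ + ‖ε • P‖ + ‖(1 + ε) • Q‖ :=
          (norm_sub_le _ _).trans (by gcongr; exact norm_add_le _ _)
      _ = ‖w‖ + ε * ‖P‖ + (1 + ε) * ‖Q‖ := by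
          rw [norm_smul, norm_smul, norm_of_nonneg hε0.le, norm_of_nonneg (by linarith)]
      _ ≤ _ := by gcongr; linarith
  have h1' := pow_le_pow_left₀ (norm_nonneg _) h1 2
  have h2' := pow_le_pow_left₀ (norm_nonneg _) h2 2
  nlinarith [sq_nonneg (‖Q‖ - ‖P‖), sq_nonneg (‖w‖ - 1 / 4 * ‖P‖),
    sq_nonneg (‖w‖ - 5 / 4 * ‖Q‖), sq_nonneg (1 / 4 * ‖P‖ - 5 / 4 * ‖Q‖),
    sq_nonneg ‖P‖, sq_nonneg ‖Q‖]

/-- Negativity of the derivative of the modal Lyapunov function. -/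
lemma modal_lyapunov_derivative_le {ε a : ℝ} (hε0 : 0 < ε) (hε : ε < 1 / 4) (ha : 0 < a)
    (w P Q g : E)
    (hg : ‖g‖ ≤ a / 5 * √(‖Q - P‖ ^ 2 + ‖w + ε • P - (1 + ε) • Q‖ ^ 2)) :
    inner ℝ w (-a • w + g) / a + 4 / 5 * inner ℝ P (w - P) + 4 / 5 * inner ℝ Q (w - Q)
      ≤ -(1 / 100) * (‖w‖ ^ 2 + ‖P‖ ^ 2 + ‖Q‖ ^ 2) := by
  have hN := norm_sq_add_norm_sq_modal_le hε0 hε w P Q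
  set N := √(‖Q - P‖ ^ 2 + ‖w + ε • P - (1 + ε) • Q‖ ^ 2) with hNdef
  have hNsq : N ^ 2 = ‖Q - P‖ ^ 2 + ‖w + ε • P - (1 + ε) • Q‖ ^ 2 := sq_sqrt (by positivity)
  rw [← hNsq] at hN
  have hwg : inner ℝ w (-a • w + g) / a ≤ -‖w‖ ^ 2 + 1 / 5 * (‖w‖ * N) := by
    rw [div_le_iff₀ ha, inner_add_right, real_inner_smul_right, real_inner_self_eq_norm_sq]
    have := (real_inner_le_norm w g).trans (mul_le_mul_of_nonneg_left hg (norm_nonneg w))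
    nlinarith
  have hP := real_inner_le_norm P w
  have hQ := real_inner_le_norm Q w
  rw [inner_sub_right, inner_sub_right, real_inner_self_eq_norm_sq, real_inner_self_eq_norm_sq]
  nlinarith [sq_nonneg (2 * ‖w‖ - N), sq_nonneg (10 * ‖P‖ - 6 * ‖w‖),
    sq_nonneg (10 * ‖Q‖ - 9 * ‖w‖), sq_nonneg ‖w‖, sq_nonneg ‖P‖, sq_nonneg ‖Q‖]

/-- Exponential stability of the PID error dynamics whose linear part has characteristic
polynomial `(s + a) (s + ε) (s + 1 + ε)`, under a perturbation `g` of gain at most `a / 5`. -/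
lemma exponential_stability_of_error_dynamics {ε a : ℝ} (hε0 : 0 < ε) (hε : ε < 1 / 4)
    (ha : 5 < a) {z e v g : ℝ → E}
    (hz : ∀ t, 0 ≤ t → HasDerivAt z (e t) t) (he : ∀ t, 0 ≤ t → HasDerivAt e (v t) t)
    (hv : ∀ t, 0 ≤ t → HasDerivAt v (g t - (ε * (1 + ε) + (1 + 2 * ε) * a) • e t
      - (ε * (1 + ε) * a) • z t - (a + 1 + 2 * ε) • v t) t)
    (hg : ∀ t, 0 ≤ t → ‖g t‖ ≤ a / 5 * √(‖e t‖ ^ 2 + ‖v t‖ ^ 2)) :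
    ∃ C > (0 : ℝ), ∃ μ > (0 : ℝ), ∀ t, 0 ≤ t → ‖e t‖ + ‖v t‖ ≤ C * exp (-μ * t) := by
  set w : ℝ → E := fun t => v t + (1 + 2 * ε) • e t + (ε * (1 + ε)) • z t with hw
  set p : ℝ → E := fun t => e t + (1 + ε) • z t with hp
  set q : ℝ → E := fun t => e t + ε • z t with hq
  have hdw : ∀ t, 0 ≤ t → HasDerivAt w (-a • w t + g t) t := fun t ht =>
    (((hv t ht).add ((he t ht).const_smul (1 + 2 * ε))).add
      ((hz t ht).const_smul (ε * (1 + ε)))).congr_deriv (by simp only [hw]; module)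
  have hdp : ∀ t, 0 ≤ t → HasDerivAt p (w t - ε • p t) t := fun t ht =>
    ((he t ht).add ((hz t ht).const_smul (1 + ε))).congr_deriv (by simp only [hw, hp]; module)
  have hdq : ∀ t, 0 ≤ t → HasDerivAt q (w t - (1 + ε) • q t) t := fun t ht =>
    ((he t ht).add ((hz t ht).const_smul ε)).congr_deriv (by simp only [hw, hq]; module)
  have he_eq : ∀ t, e t = (1 + ε) • q t - ε • p t := fun t => by
    simp only [hp, hq]; module
  have hv_eq : ∀ t, v t = w t + ε • (ε • p t) - (1 + ε) • ((1 + ε) • q t) := fun t => by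
    simp only [hw, hp, hq]; module
  set V : ℝ → ℝ := fun t =>
    ‖w t‖ ^ 2 / a + 4 / 5 * ε * ‖p t‖ ^ 2 + 4 / 5 * (1 + ε) * ‖q t‖ ^ 2 with hV
  have ha0 : 0 < a := by linarith
  have hnP : ∀ t, ‖ε • p t‖ ^ 2 = ε ^ 2 * ‖p t‖ ^ 2 := fun t => by
    rw [norm_smul, mul_pow, norm_of_nonneg hε0.le]
  have hnQ : ∀ t, ‖(1 + ε) • q t‖ ^ 2 = (1 + ε) ^ 2 * ‖q t‖ ^ 2 := fun t => by
    rw [norm_smul, mul_pow, norm_of_nonneg (by linarith)]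
  have hdV : ∀ t, 0 ≤ t → HasDerivAt V (2 * (inner ℝ (w t) (-a • w t + g t) / a
      + 4 / 5 * inner ℝ (ε • p t) (w t - ε • p t)
      + 4 / 5 * inner ℝ ((1 + ε) • q t) (w t - (1 + ε) • q t))) t := fun t ht =>
    ((((hdw t ht).norm_sq.div_const a).add ((hdp t ht).norm_sq.const_mul (4 / 5 * ε))).add
      ((hdq t ht).norm_sq.const_mul (4 / 5 * (1 + ε)))).congr_deriv (by
        rw [real_inner_smul_left (p t), real_inner_smul_left (q t)]; ring)
  have hdecay : ∀ t, 0 ≤ t → V t ≤ V 0 * exp (-(ε / 40) * t) := fun t ht => by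
    refine le_mul_exp_of_hasDerivAt_le hdV (fun s hs => ?_) ht
    have hgs := hg s hs
    rw [he_eq s, hv_eq s] at hgs
    have h := modal_lyapunov_derivative_le hε0 hε ha0 _ _ _ _ hgs
    rw [hnP, hnQ] at h
    have h1 : ε / 40 * (‖w s‖ ^ 2 / a) ≤ 1 / 50 * ‖w s‖ ^ 2 := by
      have : ‖w s‖ ^ 2 / a ≤ ‖w s‖ ^ 2 := div_le_self (sq_nonneg _) (by linarith)
      have : ε / 40 * (‖w s‖ ^ 2 / a) ≤ 1 / 50 * (‖w s‖ ^ 2 / a) :=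
        mul_le_mul_of_nonneg_right (by linarith) (by positivity)
      linarith
    have h3 : ε / 40 * (4 / 5 * (1 + ε) * ‖q s‖ ^ 2) ≤ 1 / 50 * ((1 + ε) ^ 2 * ‖q s‖ ^ 2) := by
      have : 0 ≤ (1 + ε) * ‖q s‖ ^ 2 := by positivity
      nlinarith
    simp only [hV]
    linarith
  have hbound : ∀ t, ‖e t‖ ^ 2 + ‖v t‖ ^ 2 ≤ 3 * a * V t := fun t => by
    have h := norm_sq_add_norm_sq_modal_le hε0 hε (w t) (ε • p t) ((1 + ε) • q t)
    rw [← he_eq, ← hv_eq, hnP, hnQ] at h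
    have h1 : 3 * a * (‖w t‖ ^ 2 / a) = 3 * ‖w t‖ ^ 2 := by field_simp
    have h2 : 11 / 5 * (ε ^ 2 * ‖p t‖ ^ 2) ≤ 3 * a * (4 / 5 * ε * ‖p t‖ ^ 2) := by
      have : 0 ≤ ε * ‖p t‖ ^ 2 := by positivity
      nlinarith
    have h3 : 67 / 10 * ((1 + ε) ^ 2 * ‖q t‖ ^ 2) ≤ 3 * a * (4 / 5 * (1 + ε) * ‖q t‖ ^ 2) := by
      have : 0 ≤ (1 + ε) * ‖q t‖ ^ 2 := by positivity
      nlinarith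
    simp only [hV]
    linarith
  have hV0 : 0 ≤ V 0 := by simp only [hV]; positivity
  refine ⟨√(6 * a * V 0) + 1, by positivity, ε / 80, by positivity, fun t ht => ?_⟩
  have hexp : exp (-(ε / 40) * t) = exp (-(ε / 80) * t) ^ 2 := by
    rw [← exp_nat_mul]; congr 1; push_cast; ring
  have hsq : (‖e t‖ + ‖v t‖) ^ 2 ≤ 6 * a * V 0 * exp (-(ε / 80) * t) ^ 2 := by
    have h := mul_le_mul_of_nonneg_left (hdecay t ht) (by positivity : 0 ≤ 6 * a)
    rw [hexp] at h
    nlinarith [hbound t, sq_nonneg (‖e t‖ - ‖v t‖)]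
  have h := abs_le_sqrt hsq
  rw [sqrt_mul (by positivity), sqrt_sq (exp_pos _).le] at h
  linarith [le_abs_self (‖e t‖ + ‖v t‖), exp_pos (-(ε / 80) * t)]

end Lyapunov

/-- The fundamental theorem of calculus on `[0, ∞)` for a two-sided antiderivative. -/
lemma hasDerivAt_integral_comp_max {E : Type*} [NormedAddCommGroup E] [NormedSpace ℝ E]
    [CompleteSpace E] {x : ℝ → E} (hx : ∀ t, 0 ≤ t → ContinuousAt x t) {t : ℝ} (ht : 0 ≤ t) :
    HasDerivAt (fun t => ∫ s in (0 : ℝ)..t, x (max s 0)) (x t) t := by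
  have hc : Continuous fun s => x (max s 0) := continuous_iff_continuousAt.2 fun s =>
    (hx _ (le_max_right s 0)).comp (f := fun s => max s 0) (by fun_prop)
  simpa [max_eq_left ht] using hc.integral_hasStrictDerivAt 0 t |>.hasDerivAt

theorem pid_second_order_global_stabilization_explicit_gains
    (n : ℕ) (hn : 1 ≤ n) (L : ℝ) (hL : 0 < L)
    (f : EuclideanSpace ℝ (Fin n) × EuclideanSpace ℝ (Fin n) → EuclideanSpace ℝ (Fin n))
    (hf : ∀ x y : EuclideanSpace ℝ (Fin n) × EuclideanSpace ℝ (Fin n),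
      ‖f x - f y‖ ≤ L * Real.sqrt (‖x.1 - y.1‖ ^ 2 + ‖x.2 - y.2‖ ^ 2))
    (ε a : ℝ) (hε0 : 0 < ε) (hε : ε < 1 / 4) (ha : max (5 * L) 5 < a)
    (kp ki kd : ℝ)
    (hkp : kp = -(ε * (1 + ε) + (1 + 2 * ε) * a))
    (hki : ki = -(ε * (1 + ε) * a))
    (hkd : kd = -(a + 1 + 2 * ε))
    (ystar : EuclideanSpace ℝ (Fin n))
    (x1 x2 : ℝ → EuclideanSpace ℝ (Fin n))
    (hx1 : ∀ t, 0 ≤ t → HasDerivAt x1 (x2 t) t)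
    (hx2 : ∀ t, 0 ≤ t → HasDerivAt x2
      (f (x1 t, x2 t) + kp • (x1 t - ystar)
        + ki • (∫ s in (0:ℝ)..t, (x1 s - ystar))
        + kd • x2 t) t) :
    ∃ C > (0:ℝ), ∃ μ > (0:ℝ), ∀ t, 0 ≤ t →
      ‖x1 t - ystar‖ + ‖x2 t‖ ≤ C * Real.exp (-μ * t) := by
  obtain ⟨haL, ha5⟩ := max_lt_iff.1 ha
  have hki0 : ki ≠ 0 := by
    have : 0 < ε * (1 + ε) * a := by positivity
    linarith
  refine exponential_stability_of_error_dynamics hε0 hε ha5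
    (z := fun t => (∫ s in (0 : ℝ)..t, (x1 (max s 0) - ystar)) + ki⁻¹ • f (ystar, 0))
    (e := fun t => x1 t - ystar) (v := x2) (g := fun t => f (x1 t, x2 t) - f (ystar, 0))
    (fun t ht => ?_) (fun t ht => (hx1 t ht).sub_const ystar) (fun t ht => ?_) (fun t ht => ?_)
  · exact (hasDerivAt_integral_comp_max (x := fun s => x1 s - ystar)
      (fun s hs => (hx1 s hs).continuousAt.sub continuousAt_const) ht).add_const _
  · have hint : ∫ s in (0 : ℝ)..t, (x1 (max s 0) - ystar) = ∫ s in (0 : ℝ)..t, (x1 s - ystar) :=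
      integral_congr fun s hs => by
        rw [Set.uIcc_of_le ht] at hs
        simp only [max_eq_left hs.1]
    refine (hx2 t ht).congr_deriv ?_
    have hcancel : (ε * (1 + ε) * a) • ki⁻¹ • f (ystar, 0) = -f (ystar, 0) := by
      rw [← neg_eq_iff_eq_neg.2 hki, neg_smul, smul_inv_smul₀ hki0]
    rw [hint, smul_add, hcancel, hkp, hki, hkd]
    module
  · refine (hf (x1 t, x2 t) (ystar, 0)).trans ?_
    simp only [sub_zero]
    gcongr
    linarith
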